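/- Let q ≥ 2, ℓ ≥ 1, x ∈ Z_q^n (indexed x_1, …, x_n), and let i ≥ 0 and j ≥ 1 satisfy i + j ≤ n − 2ℓ. Then the palindromic deletions π^δ_{i,ℓ}(x) and π^δ_{i+j,ℓ}(x) are both defined and yield the same word if and only if all of the following hold: x_{i+ℓ+1+m} = x_{i+ℓ−m} for all m ∈ {0, …, ℓ−1}; x_{i+ℓ+j+1+m} = x_{i+ℓ+j−m} for all m ∈ {0, …, ℓ−1}; and x_{i+2ℓ+1+m} = x_{i+ℓ+1+m} for all m ∈ {0, …, j−1}. -/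

import Mathlib

/-!
Cut `x` into windows. The deletion at position `i` is defined exactly when the window of length `ℓ`
at `i + ℓ` is the reversal of the one at `i`. For the results, write
`x.take (i + ℓ + j) = x.take (i + ℓ) ++ b` and `x.drop (i + 2ℓ) = b' ++ x.drop (i + 2ℓ + j)`, where
`b` and `b'` are the windows of length `j` at `i + ℓ` and at `i + 2ℓ`. The deletions at `i` and at
`i + j` then give the same prefix and the same suffix, around `b'` and around `b` respectively, so
they agree exactly when `b' = b`.
-/

namespace DupPaper

variable {α : Type*}

/-- `y` is obtained from `x` by one tandem duplication of length `ℓ`. -/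
def TDup (ℓ : ℕ) (x y : List α) : Prop :=
  ∃ u v w : List α, v.length = ℓ ∧ x = u ++ v ++ w ∧ y = u ++ v ++ v ++ w

/-- `y` is obtained from `x` by one tandem deletion of length `ℓ`. -/
def TDel (ℓ : ℕ) (x y : List α) : Prop :=
  ∃ u v w : List α, v.length = ℓ ∧ x = u ++ v ++ v ++ w ∧ y = u ++ v ++ w

/-- `y` is obtained from `x` by one palindromic duplication of length `ℓ`. -/
def PDup (ℓ : ℕ) (x y : List α) : Prop :=
  ∃ u v w : List α, v.length = ℓ ∧ x = u ++ v ++ w ∧ y = u ++ v ++ v.reverse ++ w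

/-- `y` is obtained from `x` by one palindromic deletion of length `ℓ`. -/
def PDel (ℓ : ℕ) (x y : List α) : Prop :=
  ∃ u v w : List α, v.length = ℓ ∧ x = u ++ v ++ v.reverse ++ w ∧ y = u ++ v ++ w

/-- `y` is reached from `x` by exactly `k` steps of the relation `rel`. -/
def reachK (rel : List α → List α → Prop) : ℕ → List α → List α → Prop
  | 0, x, y => x = y
  | k + 1, x, y => ∃ z, rel x z ∧ reachK rel k z y

/-- The sphere of all words reachable from `x` by at most `t` operations of type `rel`
(in particular it contains `x` itself). -/
def sphere (rel : List α → List α → Prop) (t : ℕ) (x : List α) : Set (List α) :=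
  {y | ∃ k ≤ t, reachK rel k x y}

/-- A code `C` is `t`-error correcting for the error type `rel` if distinct codewords have
disjoint spheres. -/
def Correcting (rel : List α → List α → Prop) (t : ℕ) (C : Set (List α)) : Prop :=
  ∀ c₁ ∈ C, ∀ c₂ ∈ C, (sphere rel t c₁ ∩ sphere rel t c₂).Nonempty → c₁ = c₂

/-- The list of maximal runs (maximal blocks of identical consecutive symbols) of a word. -/
def runs [DecidableEq α] : List α → List (List α)
  | [] => []
  | a :: rest =>
    match runs rest with
    | [] => [[a]]
    | r :: rs => if r.head? = some a then (a :: r) :: rs else [a] :: r :: rs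

/-- `r(x)`: the number of runs of `x`. -/
def numRuns [DecidableEq α] (x : List α) : ℕ := (runs x).length

/-- `r_i(x)`: the number of runs of `x` of length exactly `i`. -/
def numRunsEq [DecidableEq α] (x : List α) (i : ℕ) : ℕ :=
  ((runs x).filter (fun r => r.length = i)).length

/-- `r_{≥ i}(x)`: the number of runs of `x` of length at least `i`. -/
def numRunsGe [DecidableEq α] (x : List α) (i : ℕ) : ℕ :=
  ((runs x).filter (fun r => i ≤ r.length)).length

/-- `r_{I,2}(x)`: the number of runs of length exactly `2` located in the interior of `x`,
i.e. runs that are neither the first nor the last run of `x`. -/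
def numInteriorRuns2 [DecidableEq α] (x : List α) : ℕ :=
  ((((runs x).drop 1).dropLast).filter (fun r => r.length = 2)).length

/-- The second component `v` of the `ℓ`-step derivative `φ_ℓ(x) = (u, v)`:
`v = (x_{ℓ+1}, …, x_n) − (x_1, …, x_{n−ℓ})` componentwise in `Z_q`. -/
def derivV (q ℓ : ℕ) (x : List (ZMod q)) : List (ZMod q) :=
  List.zipWith (· - ·) (x.drop ℓ) x

/-- Hamming weight: the number of nonzero entries. -/
def wtH {q : ℕ} (v : List (ZMod q)) : ℕ := (v.filter (fun a => a ≠ 0)).length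

/-- The lengths `(m_0, m_1, …, m_p)` of the (possibly empty) maximal zero runs of `v`,
where `v = (0^{m_0}, w_1, 0^{m_1}, w_2, …, w_p, 0^{m_p})` with all `w_i ≠ 0`. -/
def zeroRunLengths {q : ℕ} : List (ZMod q) → List ℕ
  | [] => [0]
  | a :: rest =>
    let t := zeroRunLengths rest
    if a = 0 then
      match t with
      | [] => [1]
      | m :: ms => (m + 1) :: ms
    else 0 :: t

/-- The `ℓ`-zero signature `σ_ℓ(v) = (⌊m_0/ℓ⌋, …, ⌊m_p/ℓ⌋)` of `v = derivV q ℓ x`. -/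
def sig (q ℓ : ℕ) (x : List (ZMod q)) : List ℕ :=
  (zeroRunLengths (derivV q ℓ x)).map (· / ℓ)

/-- The trunk `μ_ℓ(v)`: every maximal zero run of length `m` is shortened to length
`m mod ℓ`. -/
def trunk (q ℓ : ℕ) (v : List (ZMod q)) : List (ZMod q) :=
  ((runs v).map (fun r =>
    if r.head? = some (0 : ZMod q) then List.replicate (r.length % ℓ) (0 : ZMod q) else r)).flatten

/-- The root `ρ_ℓ(x) = (u, μ_ℓ(v))` where `φ_ℓ(x) = (u, v)` is the `ℓ`-step derivative. -/
def root (q ℓ : ℕ) (x : List (ZMod q)) : List (ZMod q) × List (ZMod q) :=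
  (x.take ℓ, trunk q ℓ (derivV q ℓ x))

/-- `ℓ1`-distance of two lists of naturals. -/
def l1diff (a b : List ℕ) : ℕ := (List.zipWith (fun s t => max s t - min s t) a b).sum

/-- The tandem duplication distance `d_{τ,ℓ}`. -/
def tdDist (q ℓ : ℕ) (x₁ x₂ : List (ZMod q)) : ℕ∞ :=
  if root q ℓ x₁ = root q ℓ x₂ then (l1diff (sig q ℓ x₁) (sig q ℓ x₂) : ℕ∞) else ⊤

/-- The palindromic duplication `π_{i,ℓ}(x) = (u v v^R w)` at position `i`,
where `x = (u v w)`, `|u| = i`, `|v| = ℓ`. -/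
def pdupAt (i ℓ : ℕ) (x : List α) : List α :=
  x.take (i + ℓ) ++ ((x.drop i).take ℓ).reverse ++ x.drop (i + ℓ)

/-- The result `(u v w)` of the palindromic deletion `π^δ_{i,ℓ}` applied to
`x = (u v v^R w)` with `|u| = i`, `|v| = ℓ`. -/
def pdelAt (i ℓ : ℕ) (x : List α) : List α :=
  x.take (i + ℓ) ++ x.drop (i + 2 * ℓ)

/-- The palindromic deletion `π^δ_{i,ℓ}` is defined at position `i` of `x`, i.e. `x` has the
form `(u v v^R w)` with `|u| = i` and `|v| = ℓ`. -/
def PDelDefinedAt (q ℓ i : ℕ) (x : List (ZMod q)) : Prop :=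
  ∃ u v w : List (ZMod q), u.length = i ∧ v.length = ℓ ∧ x = u ++ v ++ v.reverse ++ w

/-- `A(n', ℓ', ω)`: the number of words in `Z_q^{n'}` whose maximal zero runs all have length
at most `ℓ'` and whose Hamming weight is `ω`. -/
noncomputable def Acount (q n' ℓ' ω : ℕ) : ℕ :=
  {x : Fin n' → ZMod q | wtH (List.ofFn x) = ω ∧
    ∀ r ∈ runs (List.ofFn x), r.head? = some (0 : ZMod q) → r.length ≤ ℓ'}.ncard

/-- Integer binomial coefficient with the conventions `C(a,b) = 0` for `a ≥ 0 > b` or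
`0 ≤ a < b`, `C(-1,-1) = 1`, and `C(a,-1) = 0` for `a ≥ 0`. -/
def ichoose (a b : ℤ) : ℕ :=
  if a = -1 ∧ b = -1 then 1
  else if 0 ≤ a ∧ 0 ≤ b then Nat.choose a.toNat b.toNat
  else 0

/-- `r^{(0)}(A^π_ℓ(x))`: the number of maximal blocks of consecutive all-zero columns of the
matrix `A^π_ℓ(x) ∈ Z_q^{ℓ × (n−2ℓ+1)}` whose entry in row `s` and column `c`
(`1 ≤ s ≤ ℓ`, `1 ≤ c ≤ n−2ℓ+1`) is `x_{2ℓ+c−s} − x_{c+s−1}`. -/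
def zeroColBlocks (q ℓ n : ℕ) (x : List (ZMod q)) : ℕ :=
  ((runs ((List.range (n - 2 * ℓ + 1)).map (fun c =>
      (List.range ℓ).all (fun s =>
        x.getD (2 * ℓ + c - s - 1) (0 : ZMod q) = x.getD (c + s) (0 : ZMod q))))).filter
    (fun r => r.head? = some true)).length

/-- `x` has the form `u v vᴿ w` with `|u| = i` and `|v| = ℓ`. This is `PDelDefinedAt` over an
arbitrary alphabet; it unfolds to `PDelDefinedAt q ℓ i x` when the alphabet is `ZMod q`. -/
def HasPalindromeAt (i ℓ : ℕ) (x : List α) : Prop :=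
  ∃ u v w : List α, u.length = i ∧ v.length = ℓ ∧ x = u ++ v ++ v.reverse ++ w

section Windows

variable {i j ℓ : ℕ} {x : List α}

theorem length_take_drop (h : i + ℓ ≤ x.length) : ((x.drop i).take ℓ).length = ℓ :=
  List.length_take_of_le (by rw [List.length_drop]; omega)

theorem hasPalindromeAt_iff_take_drop_eq_reverse (h : i + ℓ ≤ x.length) :
    HasPalindromeAt i ℓ x ↔ (x.drop (i + ℓ)).take ℓ = ((x.drop i).take ℓ).reverse := by
  constructor
  · rintro ⟨u, v, w, rfl, rfl, rfl⟩
    simp [List.drop_append, List.take_append]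
  · intro hrev
    refine ⟨x.take i, (x.drop i).take ℓ, x.drop (i + ℓ + ℓ),
      List.length_take_of_le (by omega), length_take_drop h, ?_⟩
    rw [← hrev, ← List.take_add, ← List.take_add, List.take_append_drop]

theorem pdelAt_eq_pdelAt_add_iff_take_drop_eq :
    pdelAt i ℓ x = pdelAt (i + j) ℓ x ↔
      (x.drop (i + 2 * ℓ)).take j = (x.drop (i + ℓ)).take j := by
  have prefix_split : x.take (i + j + ℓ) = x.take (i + ℓ) ++ (x.drop (i + ℓ)).take j := by
    rw [← List.take_add, Nat.add_right_comm]
  have suffix_split :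
      x.drop (i + 2 * ℓ) = (x.drop (i + 2 * ℓ)).take j ++ x.drop (i + j + 2 * ℓ) := by
    rw [Nat.add_right_comm i j, ← List.drop_drop (i := j), List.take_append_drop]
  rw [pdelAt, pdelAt, prefix_split, List.append_assoc, List.append_cancel_left_eq]
  conv_lhs => rw [suffix_split, List.append_cancel_right_eq]

end Windows

section Letters

variable {a b i j n ℓ : ℕ} {x y : List α}

theorem eq_iff_forall_getD_eq (d : α) (hx : x.length = n) (hy : y.length = n) :
    x = y ↔ ∀ m < n, x.getD m d = y.getD m d := by
  refine ⟨fun h _ _ => h ▸ rfl, fun h => List.ext_getElem (hx.trans hy.symm) fun m hmx hmy => ?_⟩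
  simpa only [List.getD_eq_getElem _ d hmx, List.getD_eq_getElem _ d hmy] using h m (hx ▸ hmx)

theorem getD_take_drop (d : α) (x : List α) (a : ℕ) {m : ℕ} (hm : m < ℓ) :
    ((x.drop a).take ℓ).getD m d = x.getD (a + m) d := by
  simp only [List.getD_eq_getElem?_getD, List.getElem?_take_of_lt hm, List.getElem?_drop]

theorem take_drop_eq_take_drop_iff_forall_getD_eq (d : α)
    (ha : a + ℓ ≤ x.length) (hb : b + ℓ ≤ x.length) :
    (x.drop a).take ℓ = (x.drop b).take ℓ ↔ ∀ m < ℓ, x.getD (a + m) d = x.getD (b + m) d := by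
  rw [eq_iff_forall_getD_eq d (length_take_drop ha) (length_take_drop hb)]
  refine forall₂_congr fun m hm => ?_
  rw [getD_take_drop d x a hm, getD_take_drop d x b hm]

theorem take_drop_eq_reverse_take_drop_iff_forall_getD_eq (d : α)
    (ha : a + ℓ ≤ x.length) (hb : b + ℓ ≤ x.length) :
    (x.drop a).take ℓ = ((x.drop b).take ℓ).reverse ↔
      ∀ m < ℓ, x.getD (a + m) d = x.getD (b + ℓ - m - 1) d := by
  have hlen : ((x.drop b).take ℓ).length = ℓ := length_take_drop hb
  rw [eq_iff_forall_getD_eq d (length_take_drop ha) (List.length_reverse.trans hlen)]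
  refine forall₂_congr fun m hm => ?_
  rw [getD_take_drop d x a hm, List.getD_reverse m (hlen.symm ▸ hm), hlen,
    getD_take_drop d x b (by omega), show b + (ℓ - 1 - m) = b + ℓ - m - 1 by omega]

theorem hasPalindromeAt_iff_forall_getD_eq (d : α) (h : i + 2 * ℓ ≤ x.length) :
    HasPalindromeAt i ℓ x ↔
      ∀ m < ℓ, x.getD (i + ℓ + m) d = x.getD (i + ℓ - m - 1) d := by
  rw [hasPalindromeAt_iff_take_drop_eq_reverse (by omega),
    take_drop_eq_reverse_take_drop_iff_forall_getD_eq d (by omega) (by omega)]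

theorem pdelAt_eq_pdelAt_add_iff_forall_getD_eq (d : α) (h : i + j + 2 * ℓ ≤ x.length) :
    pdelAt i ℓ x = pdelAt (i + j) ℓ x ↔
      ∀ m < j, x.getD (i + 2 * ℓ + m) d = x.getD (i + ℓ + m) d := by
  rw [pdelAt_eq_pdelAt_add_iff_take_drop_eq,
    take_drop_eq_take_drop_iff_forall_getD_eq d (by omega) (by omega)]

-- Every index below is a position of `x`, so the default `d` is never returned.
theorem stmt19_general (d : α) (h : i + j + 2 * ℓ ≤ x.length) :
    (HasPalindromeAt i ℓ x ∧ HasPalindromeAt (i + j) ℓ x ∧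
        pdelAt i ℓ x = pdelAt (i + j) ℓ x) ↔
      ((∀ m < ℓ, x.getD (i + ℓ + m) d = x.getD (i + ℓ - m - 1) d) ∧
       (∀ m < ℓ, x.getD (i + ℓ + j + m) d = x.getD (i + ℓ + j - m - 1) d) ∧
       (∀ m < j, x.getD (i + 2 * ℓ + m) d = x.getD (i + ℓ + m) d)) := by
  rw [hasPalindromeAt_iff_forall_getD_eq d (by omega),
    hasPalindromeAt_iff_forall_getD_eq d h,
    pdelAt_eq_pdelAt_add_iff_forall_getD_eq d h, Nat.add_right_comm i j ℓ]

end Letters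

/-- Conditions for two palindromic deletions at positions `i` and `i+j`, `j ≥ 1`, to both be
defined and yield the same word (indices are 1-based: `x_k` is `x.getD (k-1) 0`). -/
theorem stmt19 (q ℓ n : ℕ) (hq : 2 ≤ q) (hℓ : 1 ≤ ℓ) (x : List (ZMod q)) (hx : x.length = n)
    (i j : ℕ) (hj : 1 ≤ j) (hij : i + j + 2 * ℓ ≤ n) :
    (PDelDefinedAt q ℓ i x ∧ PDelDefinedAt q ℓ (i + j) x ∧
        pdelAt i ℓ x = pdelAt (i + j) ℓ x) ↔
      ((∀ m < ℓ, x.getD (i + ℓ + m) 0 = x.getD (i + ℓ - m - 1) 0) ∧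
       (∀ m < ℓ, x.getD (i + ℓ + j + m) 0 = x.getD (i + ℓ + j - m - 1) 0) ∧
       (∀ m < j, x.getD (i + 2 * ℓ + m) 0 = x.getD (i + ℓ + m) 0)) :=
  stmt19_general 0 (hx ▸ hij)

end DupPaper
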